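/- Let k >= 0, j >= 0, m >= 1 be integers and let r_1, ..., r_m be nonnegative integers with r_1 + 2*r_2 + ... + m*r_m = m; set n = 2m + kj. Then the number of words in L_{n,k}^{m,j} with \alpha_i(L) = r_i for every i equals (m+1) times the number of k-paths in P_{n,k}^{m,j} with \alpha_i(P) = r_i for every i. (Equivalently, there is a u-segment-type-preserving bijection between L_{n,k}^{m,j} and the set of pairs (P, c) where P \in P_{n,k}^{m,j} and c is one of the m+1 down-steps of the word P d.) -/

import Mathlib

open Finset

inductive Step : Type
  | u | d | h
deriving DecidableEq

/-- Lengths of maximal blocks of letters with `wt s ≠ none`, weighted by `wt`. -/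
def runs (wt : Step → Option ℕ) : List Step → List ℕ
  | [] => []
  | s :: l =>
    match wt s, runs wt l with
    | none, r => r
    | some n, r =>
      match l with
      | [] => [n]
      | s' :: _ =>
        match wt s' with
        | none => n :: r
        | some _ =>
          match r with
          | a :: rest => (n + a) :: rest
          | [] => [n]

def uRuns : List Step → List ℕ :=
  runs (fun s => match s with | Step.u => some 1 | _ => none)

def uhRuns (k : ℕ) : List Step → List ℕ :=
  runs (fun s => match s with | Step.u => some 1 | Step.h => some k | Step.d => none)

def alpha (i : ℕ) (w : List Step) : ℕ := (uRuns w).count i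

def beta (i : ℕ) (w : List Step) : ℕ := (uRuns w).tail.count i

def IsNonneg (w : List Step) : Prop :=
  ∀ i : ℕ, (w.take i).count Step.d ≤ (w.take i).count Step.u

def pathSet (m j : ℕ) : Set (List Step) :=
  {w | w.count Step.u = m ∧ w.count Step.d = m ∧ w.count Step.h = j ∧ IsNonneg w}

/-- no horizontal step lies on the x-axis -/
def NoLowH (w : List Step) : Prop :=
  ∀ (i : ℕ) (hi : i < w.length), w[i]'hi = Step.h →
    (w.take i).count Step.u ≠ (w.take i).count Step.d

def qSet (m j : ℕ) : Set (List Step) :=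
  {w | w ∈ pathSet m j ∧ NoLowH w}

/-- normalized partial Bell polynomial (r!/m!) B_{m,r}(1!t₁,2!t₂,…) -/
def bellNorm (m r : ℕ) (t : ℕ → ℚ) : ℚ :=
  ∑ f : Fin m → Fin (m + 1),
    if (∑ i : Fin m, (f i : ℕ)) = r ∧ (∑ i : Fin m, ((i : ℕ) + 1) * (f i : ℕ)) = m then
      (r.factorial : ℚ) / (∏ i : Fin m, ((f i : ℕ).factorial : ℚ)) * ∏ i : Fin m, t ((i : ℕ) + 1) ^ (f i : ℕ)
    else 0

/-- normalized potential polynomial  P_p^{(lam)}(1!t₁,2!t₂,…)/p! -/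
def potential (lam p : ℕ) (t : ℕ → ℚ) : ℚ :=
  ∑ r ∈ Finset.range (p + 1), (Nat.choose lam r : ℚ) * bellNorm p r t

/-!
Cut a word with `m` up-steps and `m` down-steps at its down-steps, obtaining `m + 1` blocks, and
give a block the weight (number of its up-steps) `- 1`. The weights add up to `-1`, and the word
stays above the axis exactly when all proper prefix sums of the weights are nonnegative. By the
cycle lemma exactly one of the `m + 1` rotations of the list of blocks has this property. No
`u`-segment crosses a down-step, so rotating the blocks preserves the `u`-segment type.
-/

section CycleLemma

/-- The proper prefix sums of `a`, shifted by `c`, are nonnegative: the path with increments `a`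
started at height `c` stays weakly above the axis, except possibly at its endpoint. For `c = 0` and
`a.sum = -1` this is the condition selecting one rotation of `a` in the cycle lemma. -/
def StaysNonneg (c : ℤ) (a : List ℤ) : Prop :=
  ∀ i < a.length, 0 ≤ c + (a.take i).sum

theorem staysNonneg_cons {c x : ℤ} {a : List ℤ} :
    StaysNonneg c (x :: a) ↔ 0 ≤ c ∧ StaysNonneg (c + x) a := by
  rw [StaysNonneg, ← Nat.and_forall_add_one]
  simp [StaysNonneg, add_assoc]

theorem staysNonneg_append_cons {c x : ℤ} {a b : List ℤ} (ha : ∀ y ∈ a, 0 ≤ y) :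
    StaysNonneg c (a ++ x :: b) ↔ 0 ≤ c ∧ StaysNonneg (c + (a.sum + x)) b := by
  induction a generalizing c with
  | nil => simp [staysNonneg_cons]
  | cons y a ih =>
    rw [List.forall_mem_cons] at ha
    rw [List.cons_append, staysNonneg_cons, ih ha.2, List.sum_cons, add_assoc y, ← add_assoc c]
    exact ⟨fun h ↦ ⟨h.1, h.2.2⟩, fun h ↦ ⟨h.1, add_nonneg h.1 ha.1, h.2⟩⟩

theorem sum_take_rotate {a : List ℤ} {i l : ℕ} (hi : i ≤ a.length) (hl : l ≤ a.length) :
    ((a.rotate i).take l).sum =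
      (a.take (i + l)).sum - (a.take i).sum + (a.take (l - (a.length - i))).sum := by
  rw [List.rotate_eq_drop_append_take hi, List.take_append, List.take_take, List.length_drop,
    min_eq_left (by omega), List.take_add, List.sum_append, List.sum_append]
  ring

theorem exists_rotate_staysNonneg {a : List ℤ} (ha : a.sum = -1) :
    ∃ i, 0 < i ∧ i ≤ a.length ∧ StaysNonneg 0 (a.rotate i) := by
  -- Rotate to the first position at which the prefix sums attain their minimum.
  obtain ⟨i, hi, hmin⟩ := (range (a.length + 1)).exists_min_image
    (fun t ↦ toLex ((a.take t).sum, t)) ⟨0, by simp⟩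
  have hi : i ≤ a.length := by simpa [Nat.lt_succ_iff] using hi
  have hfirst : ∀ t ≤ a.length, (a.take i).sum < (a.take t).sum ∨
      (a.take i).sum = (a.take t).sum ∧ i ≤ t := fun t ht ↦
    Prod.Lex.toLex_le_toLex.1 (hmin t (mem_range.2 (Nat.lt_succ_of_le ht)))
  have hend := hfirst a.length le_rfl
  rw [List.take_length, ha] at hend
  refine ⟨i, ?_, hi, fun l hl ↦ ?_⟩
  · by_contra! h
    obtain rfl : i = 0 := by omega
    simp at hend
  rw [List.length_rotate] at hl
  rw [zero_add, sum_take_rotate hi hl.le]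
  rcases le_or_gt (i + l) a.length with h | h
  · have := hfirst (i + l) h
    rw [Nat.sub_eq_zero_of_le (by omega : l ≤ a.length - i), List.take_zero, List.sum_nil]
    omega
  · have := hfirst (l - (a.length - i)) (by omega)
    rw [List.take_of_length_le h.le, ha]
    omega

theorem StaysNonneg.eq_zero_of_rotate {a : List ℤ} (ha : a.sum = -1) (h : StaysNonneg 0 a) {i : ℕ}
    (hi : i < a.length) (hrot : StaysNonneg 0 (a.rotate i)) : i = 0 := by
  by_contra hne
  have hprefix : 0 ≤ (a.take i).sum := by simpa using h i hi
  have hsuffix := hrot (a.length - i) (by rw [List.length_rotate]; omega)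
  rw [sum_take_rotate hi.le (by omega), Nat.add_sub_cancel' hi.le, List.take_length, ha] at hsuffix
  simp only [Nat.sub_self, List.take_zero, List.sum_nil] at hsuffix
  omega

variable {α : Type*} {f : α → ℤ}

theorem StaysNonneg.rotate_inj {a b : List α} (ha : StaysNonneg 0 (a.map f))
    (hb : StaysNonneg 0 (b.map f)) (hsum : (b.map f).sum = -1) {i j : ℕ} (hij : i ≤ j)
    (hj : j < b.length) (h : a.rotate i = b.rotate j) : a = b ∧ i = j := by
  have hab : a = b.rotate (j - i) := by
    apply List.rotate_injective i
    simpa [List.rotate_rotate, Nat.sub_add_cancel hij] using h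
  have hzero : j - i = 0 :=
    hb.eq_zero_of_rotate hsum (by rw [List.length_map]; omega) (by rwa [← List.map_rotate, ← hab])
  exact ⟨by simpa [hzero] using hab, by omega⟩

theorem bijOn_rotate_staysNonneg {n : ℕ} {A : Set (List α)} (hrot : ∀ a ∈ A, ∀ i, a.rotate i ∈ A)
    (hlen : ∀ a ∈ A, a.length = n) (hsum : ∀ a ∈ A, (a.map f).sum = -1) :
    Set.BijOn (fun p : List α × ℕ ↦ p.1.rotate p.2)
      ({a ∈ A | StaysNonneg 0 (a.map f)} ×ˢ Set.Iio n) A := by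
  refine ⟨fun p hp ↦ hrot _ hp.1.1 _, ?_, fun b hb ↦ ?_⟩
  · rintro ⟨a, i⟩ ⟨⟨ha, ha₀⟩, hi⟩ ⟨b, j⟩ ⟨⟨hb, hb₀⟩, hj⟩ hab
    simp only [Set.mem_Iio] at ha ha₀ hi hb hb₀ hj hab
    rcases le_total i j with hij | hji
    · obtain ⟨rfl, rfl⟩ := ha₀.rotate_inj hb₀ (hsum b hb) hij (by rwa [hlen b hb]) hab
      rfl
    · obtain ⟨rfl, rfl⟩ := hb₀.rotate_inj ha₀ (hsum a ha) hji (by rwa [hlen a ha]) hab.symm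
      rfl
  · obtain ⟨i, hi₀, hin, hi⟩ := exists_rotate_staysNonneg (hsum b hb)
    rw [List.length_map] at hin
    refine ⟨(b.rotate i, b.length - i), ⟨⟨hrot b hb i, by rwa [List.map_rotate]⟩, ?_⟩, ?_⟩
    · have := hlen b hb
      simp only [Set.mem_Iio]
      omega
    · simp only [List.rotate_rotate, Nat.add_sub_cancel' hin, List.rotate_length]

theorem ncard_eq_mul_ncard_staysNonneg {n : ℕ} {A : Set (List α)}
    (hrot : ∀ a ∈ A, ∀ i, a.rotate i ∈ A) (hlen : ∀ a ∈ A, a.length = n)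
    (hsum : ∀ a ∈ A, (a.map f).sum = -1) :
    A.ncard = n * {a ∈ A | StaysNonneg 0 (a.map f)}.ncard := by
  rw [← (bijOn_rotate_staysNonneg hrot hlen hsum).ncard_eq, Set.ncard_prod, mul_comm, ← coe_Iio,
    Set.ncard_coe_finset, Nat.card_Iio]

end CycleLemma

section SplitOn

variable {α : Type*} {a : α}

@[elab_as_elim]
theorem separator_induction {motive : List α → Prop} (free : ∀ b, a ∉ b → motive b)
    (append : ∀ b w, a ∉ b → motive w → motive (b ++ a :: w)) (w : List α) : motive w := by
  by_cases h : a ∈ w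
  · obtain ⟨b, w', rfl, hb⟩ := List.eq_append_cons_of_mem h
    exact append b w' hb (separator_induction free append w')
  · exact free w h
termination_by w.length

variable [DecidableEq α]

theorem length_splitOn (a : α) (w : List α) : (w.splitOn a).length = w.count a + 1 := by
  induction w using separator_induction (a := a) with
  | free b hb => simp [List.splitOn_eq_singleton hb, List.count_eq_zero_of_not_mem hb]
  | append b w hb ih =>
    simp [List.splitOn_append_cons_self_of_not_mem hb, List.count_eq_zero_of_not_mem hb, ih]

theorem notMem_of_mem_splitOn {w b : List α} (h : b ∈ w.splitOn a) : a ∉ b := by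
  induction w using separator_induction (a := a) with
  | free b' hb' =>
    rw [List.splitOn_eq_singleton hb', List.mem_singleton] at h
    exact h ▸ hb'
  | append b' w hb' ih =>
    rw [List.splitOn_append_cons_self_of_not_mem hb', List.mem_cons] at h
    rcases h with rfl | h
    · exact hb'
    · exact ih h

theorem count_flatten_splitOn {x : α} (hx : x ≠ a) (w : List α) :
    (w.splitOn a).flatten.count x = w.count x := by
  induction w using separator_induction (a := a) with
  | free b hb => simp [List.splitOn_eq_singleton hb]
  | append b w hb ih => simp [List.splitOn_append_cons_self_of_not_mem hb, ih, hx.symm]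

theorem splitOn_injective (a : α) : Function.Injective (List.splitOn a) :=
  Function.LeftInverse.injective (g := List.intercalate [a]) fun _ ↦ List.intercalate_splitOn a

theorem exists_splitOn_eq_rotate (a : α) (w : List α) (i : ℕ) :
    ∃ w' : List α, w'.splitOn a = (w.splitOn a).rotate i :=
  ⟨_, List.splitOn_intercalate a (fun _ hb ↦ notMem_of_mem_splitOn (List.mem_rotate.1 hb))
    (mt List.rotate_eq_nil_iff.1 (List.splitOn_ne_nil a w))⟩

theorem count_eq_of_splitOn_perm {w w' : List α} (h : (w.splitOn a).Perm (w'.splitOn a)) (x : α) :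
    w.count x = w'.count x := by
  obtain rfl | hx := eq_or_ne x a
  · simpa [length_splitOn] using h.length_eq
  · rw [← count_flatten_splitOn hx, h.flatten.count_eq, count_flatten_splitOn hx]

end SplitOn

section Runs

variable {wt : Step → Option ℕ}

theorem runs_cons_ne_nil {s : Step} (hs : wt s ≠ none) (w : List Step) :
    runs wt (s :: w) ≠ [] := by
  rw [runs]
  repeat' split
  all_goals simp_all

theorem runs_append_cons_of_eq_none {s : Step} (hs : wt s = none) (v w : List Step) :
    runs wt (v ++ s :: w) = runs wt v ++ runs wt w := by
  induction v with
  | nil => simp [runs, hs]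
  | cons t v ih =>
    rw [List.cons_append, runs, runs, ih]
    cases ht : wt t with
    | none => rfl
    | some n =>
      cases v with
      | nil => simp [runs, hs]
      | cons t' v =>
        cases ht' : wt t' with
        | none => simp [ht']
        | some n' =>
          obtain ⟨r, rs, hr⟩ :=
            List.exists_cons_of_ne_nil (runs_cons_ne_nil (wt := wt) (s := t') (by simp [ht']) v)
          simp [ht', hr]

theorem flatMap_uRuns_splitOn (w : List Step) : (w.splitOn Step.d).flatMap uRuns = uRuns w := by
  induction w using separator_induction (a := Step.d) with
  | free b hb => simp [List.splitOn_eq_singleton hb]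
  | append b w hb ih =>
    rw [List.splitOn_append_cons_self_of_not_mem hb, List.flatMap_cons, ih]
    exact (runs_append_cons_of_eq_none rfl b w).symm

end Runs

/-- The change of height along a step. -/
def Step.rise : Step → ℤ
  | u => 1
  | d => -1
  | h => 0

/-- The total rise of a block `b` between down-steps together with the down-step that ends it. -/
def blockRise (b : List Step) : ℤ :=
  (b.map Step.rise).sum - 1

theorem sum_map_rise (w : List Step) :
    (w.map Step.rise).sum = (w.count Step.u : ℤ) - w.count Step.d := by
  induction w with
  | nil => simp
  | cons s w ih => cases s <;> simp [Step.rise, ih] <;> ring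

theorem sum_map_blockRise_splitOn (w : List Step) :
    ((w.splitOn Step.d).map blockRise).sum = (w.map Step.rise).sum - 1 := by
  induction w using separator_induction (a := Step.d) with
  | free b hb => simp [List.splitOn_eq_singleton hb, blockRise]
  | append b w hb ih =>
    simp only [List.splitOn_append_cons_self_of_not_mem hb, List.map_cons, List.sum_cons, ih,
      blockRise, List.map_append, List.sum_append, Step.rise]
    ring

theorem isNonneg_iff_staysNonneg (w : List Step) :
    IsNonneg w ↔ StaysNonneg 0 ((w ++ [Step.d]).map Step.rise) := by
  have sum_take (i : ℕ) (hi : i ≤ w.length) : (((w ++ [Step.d]).map Step.rise).take i).sum =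
      ((w.take i).count Step.u : ℤ) - (w.take i).count Step.d := by
    rw [← List.map_take, List.take_append_of_le_length hi, sum_map_rise]
  constructor
  · intro h i hi
    have hi : i ≤ w.length := by simpa [Nat.lt_succ_iff] using hi
    rw [zero_add, sum_take i hi, sub_nonneg]
    exact_mod_cast h i
  · intro h i
    have hi := h (min i w.length) (by simp)
    rw [zero_add, sum_take _ (min_le_right _ _), ← List.take_eq_take_min, sub_nonneg] at hi
    exact_mod_cast hi

theorem staysNonneg_map_blockRise_iff (c : ℤ) (w : List Step) :
    StaysNonneg c ((w.splitOn Step.d).map blockRise) ↔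
      StaysNonneg c ((w ++ [Step.d]).map Step.rise) := by
  have rise_nonneg : ∀ {b : List Step}, Step.d ∉ b → ∀ y ∈ b.map Step.rise, 0 ≤ y := by
    intro b hb y hy
    obtain ⟨s, hs, rfl⟩ := List.mem_map.1 hy
    cases s
    · decide
    · exact absurd hs hb
    · decide
  induction w using separator_induction (a := Step.d) generalizing c with
  | free b hb =>
    rw [List.splitOn_eq_singleton hb, List.map_append, List.map_singleton,
      List.map_singleton, staysNonneg_append_cons (rise_nonneg hb), staysNonneg_cons]
    simp [StaysNonneg]
  | append b w hb ih =>
    rw [List.splitOn_append_cons_self_of_not_mem hb, List.map_cons, staysNonneg_cons,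
      List.append_assoc, List.cons_append, List.map_append, List.map_cons,
      staysNonneg_append_cons (rise_nonneg hb)]
    exact and_congr_right fun _ ↦ ih (c + blockRise b)

theorem staysNonneg_map_blockRise_iff_isNonneg (w : List Step) :
    StaysNonneg 0 ((w.splitOn Step.d).map blockRise) ↔ IsNonneg w := by
  rw [staysNonneg_map_blockRise_iff, isNonneg_iff_staysNonneg]

theorem ncard_words_eq_mul_ncard_isNonneg (m : ℕ) {C : Set (List (List Step))}
    (hC : ∀ bs ∈ C, ∀ i, bs.rotate i ∈ C) :
    {w : List Step | w.count Step.u = m ∧ w.count Step.d = m ∧ w.splitOn Step.d ∈ C}.ncard =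
      (m + 1) * {w : List Step | (w.count Step.u = m ∧ w.count Step.d = m ∧
        w.splitOn Step.d ∈ C) ∧ IsNonneg w}.ncard := by
  set W := {w : List Step | w.count Step.u = m ∧ w.count Step.d = m ∧ w.splitOn Step.d ∈ C}
  have hrot : ∀ a ∈ List.splitOn Step.d '' W, ∀ i, a.rotate i ∈ List.splitOn Step.d '' W := by
    rintro _ ⟨w, ⟨hu, hd, hw⟩, rfl⟩ i
    obtain ⟨w', hw'⟩ := exists_splitOn_eq_rotate Step.d w i
    have hcount := count_eq_of_splitOn_perm (hw' ▸ List.rotate_perm (w.splitOn Step.d) i)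
    exact ⟨w', ⟨(hcount _).trans hu, (hcount _).trans hd, hw' ▸ hC _ hw i⟩, hw'⟩
  have hlen : ∀ a ∈ List.splitOn Step.d '' W, a.length = m + 1 := by
    rintro _ ⟨w, ⟨-, hd, -⟩, rfl⟩
    rw [length_splitOn, hd]
  have hsum : ∀ a ∈ List.splitOn Step.d '' W, (a.map blockRise).sum = -1 := by
    rintro _ ⟨w, ⟨hu, hd, -⟩, rfl⟩
    rw [sum_map_blockRise_splitOn, sum_map_rise, hu, hd]
    ring
  have hgood : {a | a ∈ List.splitOn Step.d '' W ∧ StaysNonneg 0 (a.map blockRise)} =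
      List.splitOn Step.d '' {w | w ∈ W ∧ IsNonneg w} := by
    simp only [← staysNonneg_map_blockRise_iff_isNonneg]
    exact Set.image_inter_preimage _ W {a | StaysNonneg 0 (List.map blockRise a)} |>.symm
  rw [← Set.ncard_image_of_injective W (splitOn_injective Step.d),
    ncard_eq_mul_ncard_staysNonneg hrot hlen hsum, hgood,
    Set.ncard_image_of_injective _ (splitOn_injective Step.d)]
  rfl

theorem stmt11 (k j m : ℕ) (hm : 1 ≤ m) (rv : ℕ → ℕ)
    (hsum : ∑ i ∈ Finset.Icc 1 m, i * rv i = m) :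
    Set.ncard {w : List Step | w.count Step.u = m ∧ w.count Step.d = m ∧
        w.count Step.h = j ∧ ∀ i ∈ Finset.Icc 1 m, alpha i w = rv i} =
      (m + 1) * Set.ncard {w ∈ pathSet m j | ∀ i ∈ Finset.Icc 1 m, alpha i w = rv i} := by
  let C : Set (List (List Step)) := {bs | bs.flatten.count Step.h = j ∧
    ∀ i ∈ Finset.Icc 1 m, (bs.flatMap uRuns).count i = rv i}
  have hC : ∀ bs ∈ C, ∀ i, bs.rotate i ∈ C := by
    rintro bs ⟨hh, hα⟩ i
    have hperm := List.rotate_perm bs i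
    exact ⟨hperm.flatten.count_eq _ ▸ hh,
      fun l hl ↦ (hperm.flatMap_right uRuns).count_eq l ▸ hα l hl⟩
  have mem_C (w : List Step) : w.splitOn Step.d ∈ C ↔
      w.count Step.h = j ∧ ∀ i ∈ Finset.Icc 1 m, alpha i w = rv i := by
    simp only [C, Set.mem_ofPred_eq, count_flatten_splitOn (by decide : Step.h ≠ Step.d),
      flatMap_uRuns_splitOn, alpha]
  have hset : {w ∈ pathSet m j | ∀ i ∈ Finset.Icc 1 m, alpha i w = rv i} =
      {w | (w.count Step.u = m ∧ w.count Step.d = m ∧ w.splitOn Step.d ∈ C) ∧ IsNonneg w} := by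
    ext w
    simp only [pathSet, Set.mem_ofPred_eq, mem_C]
    tauto
  rw [hset, ← ncard_words_eq_mul_ncard_isNonneg m hC]
  simp only [mem_C]
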